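/- Let Γ be a distance-regular graph with classical parameters (D, b, α, β), D ≥ 4, and intersection numbers a₁ = 0 and a₂ ≠ 0. Suppose s t u z w is a pentagon in Γ, where s, u ∈ Γ₃(x) and z ∈ Γ₂(x) for some vertex x. Then B(x,s) = B(x,u). -/

import Mathlib

/-!
Common definitions: distance-regular graphs (via an intersection-number function `p`),
classical parameters, and the sets `B(x,y)`, `A(x,y)`, `C(x,y)`.
The distance `∂` is `SimpleGraph.dist`.
-/

variable {V : Type*}

/-- `Γ` is distance-regular with intersection numbers `p h i j = p^h_{ij}`
(for indices up to the diameter `D`). -/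
def SimpleGraph.IsDistRegularWith (G : SimpleGraph V) (D : ℕ) (p : ℕ → ℕ → ℕ → ℕ) : Prop :=
  ∀ h i j : ℕ, h ≤ D → i ≤ D → j ≤ D → ∀ x y : V, G.dist x y = h →
    {z : V | G.dist x z = i ∧ G.dist y z = j}.ncard = p h i j

/-- The Gaussian bracket `[i] = 1 + b + b² + ⋯ + b^{i-1}`. -/
def gaussBracket (b : ℝ) (i : ℕ) : ℝ := ∑ k ∈ Finset.range i, b ^ k

/-- A distance-regular graph with intersection numbers `p` has classical parameters
`(D, b, α, β)`: `b ∉ {0, -1}`, `c_i = [i](1 + α[i-1])` and `b_i = ([D]-[i])(β - α[i])`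
for `0 ≤ i ≤ D`, where `c_i = p^i_{1,i-1}` and `b_i = p^i_{1,i+1}`. -/
def HasClassicalParams (D : ℕ) (p : ℕ → ℕ → ℕ → ℕ) (b α β : ℝ) : Prop :=
  b ≠ 0 ∧ b ≠ -1 ∧
    (∀ i ≤ D, (p i 1 (i - 1) : ℝ) = gaussBracket b i * (1 + α * gaussBracket b (i - 1))) ∧
    (∀ i ≤ D, (p i 1 (i + 1) : ℝ) =
      (gaussBracket b D - gaussBracket b i) * (β - α * gaussBracket b i))

/-- `B(x,y) = Γ₁(x) ∩ Γ_{∂(x,y)+1}(y)`. -/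
def Bset (G : SimpleGraph V) (x y : V) : Set V :=
  {v | G.dist x v = 1 ∧ G.dist y v = G.dist x y + 1}

/-- `A(x,y) = Γ₁(x) ∩ Γ_{∂(x,y)}(y)`. -/
def Aset (G : SimpleGraph V) (x y : V) : Set V :=
  {v | G.dist x v = 1 ∧ G.dist y v = G.dist x y}

/-- `C(x,y) = Γ₁(x) ∩ Γ_{∂(x,y)-1}(y)`. -/
def Cset (G : SimpleGraph V) (x y : V) : Set V :=
  {v | G.dist x v = 1 ∧ G.dist y v = G.dist x y - 1}

/-!
Let `q = 1/b`, let `A` be the adjacency matrix and `S_x` the diagonal matrix with entries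
`q ^ ∂(x, y)`. On coefficient sequences, the three-term recurrence of `A` and multiplication by
`q ^ i` satisfy an Askey–Wilson relation. Averaging the resulting matrices over `x` stays in the
span of the distance matrices, because `∑ₓ S_x Y S_x` is a Hadamard multiple of `Y`; positivity of
the trace form then forces `A` to commute with an Askey–Wilson polynomial in `A` and each `S_x`.
The entries of this tridiagonal relation are Terwilliger's balanced set conditions at distances `2`
and `3`. Integrality of the intersection numbers gives `b < -1`, so `-1 < q < 0`, and the
alternating signs of the powers of `q` in the balanced sums pin down the distances from a neighbour
of `x` to the vertices of the pentagon.
-/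

section AskeyWilson

variable {K R ι : Type*} [Field K] [Ring R] [Algebra K R]

/-- The Askey–Wilson polynomial `A²S - τASA + SA² - γ(AS + SA) - ρS`. For `A` the adjacency matrix
and `S` a dual adjacency matrix, Terwilliger's tridiagonal relation says that it commutes
with `A`. -/
def awPoly (τ γ ρ : K) (A S : R) : R :=
  A * A * S - τ • (A * S * A) + S * A * A - γ • (A * S + S * A) - ρ • S

lemma awPoly_smul_add_smul_one (τ γ ρ e e' : K) (A S : R) :
    awPoly τ γ ρ A (e • S + e' • 1) =
      e • awPoly τ γ ρ A S + e' • ((2 - τ) • (A * A) - (2 * γ) • A - ρ • 1) := by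
  simp only [awPoly, mul_add, add_mul, mul_smul_comm, smul_mul_assoc, mul_one, one_mul]
  module

lemma commute_awPoly_smul_add_smul_one {τ γ ρ : K} {A S : R}
    (h : Commute A (awPoly τ γ ρ A S)) (e e' : K) :
    Commute A (awPoly τ γ ρ A (e • S + e' • 1)) := by
  rw [awPoly_smul_add_smul_one]
  have hAA : Commute A (A * A) := (Commute.refl A).mul_right (Commute.refl A)
  exact (h.smul_right e).add_right
    ((((hAA.smul_right _).sub_right ((Commute.refl A).smul_right _)).sub_right
      ((Commute.one_right A).smul_right _)).smul_right _)

/-- The elements `F` with `F Sₓ A - A Sₓ F = P Sₓ - Sₓ P` for all `x`, for some polynomial `P` in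
`A`. For the distance-`i` matrix `F`, the entries of this identity are Terwilliger's balanced set
condition at distance `i`. -/
def balancedSubmodule (K : Type*) {R : Type*} [Field K] [Ring R] [Algebra K R] (A : R)
    (S : ι → R) : Submodule K R where
  carrier := {F | ∃ P ∈ Algebra.adjoin K {A}, ∀ x, F * S x * A - A * S x * F = P * S x - S x * P}
  zero_mem' := ⟨0, zero_mem _, by simp⟩
  add_mem' := by
    rintro F F' ⟨P, hP, hF⟩ ⟨P', hP', hF'⟩
    refine ⟨P + P', add_mem hP hP', fun x => ?_⟩
    linear_combination (norm := noncomm_ring) hF x + hF' x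
  smul_mem' := by
    rintro e F ⟨P, hP, hF⟩
    refine ⟨e • P, Subalgebra.smul_mem _ hP e, fun x => ?_⟩
    simp only [smul_mul_assoc, mul_smul_comm, ← smul_sub, hF x]

lemma one_mem_balancedSubmodule (A : R) (S : ι → R) : 1 ∈ balancedSubmodule K A S :=
  ⟨-A, neg_mem (Algebra.self_mem_adjoin_singleton K A), fun x => by noncomm_ring⟩

lemma self_mem_balancedSubmodule (A : R) (S : ι → R) : A ∈ balancedSubmodule K A S :=
  ⟨0, zero_mem _, fun x => by noncomm_ring⟩

lemma sq_mul_mul_sub_mul_mul_sq {τ γ ρ : K} {A S P : R} (hτ : τ + 1 ≠ 0)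
    (hP : (τ + 1) • P = A ^ 3 - γ • A ^ 2 - ρ • A) (h : Commute A (awPoly τ γ ρ A S)) :
    A ^ 2 * S * A - A * S * A ^ 2 = P * S - S * P := by
  apply smul_right_injective R hτ
  simp only [smul_sub, ← smul_mul_assoc _ P, ← mul_smul_comm _ S P, hP]
  rw [commute_iff_eq] at h
  simp only [awPoly, mul_add, mul_sub, add_mul, sub_mul, mul_smul_comm, smul_mul_assoc,
    ← mul_assoc] at h
  simp only [mul_sub, sub_mul, mul_smul_comm, smul_mul_assoc, pow_succ, pow_zero, one_mul,
    ← mul_assoc]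
  linear_combination (norm := module) -h

lemma cube_mul_mul_sub_mul_mul_cube {τ γ ρ : K} {A S P Q : R} (hτ : τ ≠ 0)
    (hP : (τ + 1) • P = A ^ 3 - γ • A ^ 2 - ρ • A) (hQ : τ • Q = (τ + 1) • (A * P) - γ • P)
    (hAP : A * P = P * A) (h : A ^ 2 * S * A - A * S * A ^ 2 = P * S - S * P) :
    A ^ 3 * S * A - A * S * A ^ 3 = Q * S - S * Q := by
  have hcube : A ^ 3 * S * A - A * S * A ^ 3 =
      A * (A ^ 2 * S * A - A * S * A ^ 2) + (A ^ 2 * S * A - A * S * A ^ 2) * A := by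
    noncomm_ring
  have hPSA : (τ + 1) • (P * S * A - A * S * P) =
      (A ^ 3 * S * A - A * S * A ^ 3) - γ • (P * S - S * P) := by
    calc (τ + 1) • (P * S * A - A * S * P)
      _ = ((τ + 1) • P) * S * A - A * S * ((τ + 1) • P) := by
        simp only [smul_sub, smul_mul_assoc, mul_smul_comm]
      _ = (A ^ 3 * S * A - A * S * A ^ 3) - γ • (A ^ 2 * S * A - A * S * A ^ 2) := by
        rw [hP]
        simp only [mul_sub, sub_mul, mul_smul_comm, smul_mul_assoc]
        module
      _ = _ := by rw [h]
  rw [h, mul_sub, sub_mul, ← mul_assoc, ← mul_assoc, mul_assoc S P A, ← hAP] at hcube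
  apply smul_right_injective R hτ
  simp only [smul_sub, ← smul_mul_assoc _ Q, ← mul_smul_comm _ S Q, hQ]
  simp only [mul_sub, sub_mul, mul_smul_comm, smul_mul_assoc]
  linear_combination (norm := module) (τ + 1) • hcube + hPSA

lemma sq_mem_balancedSubmodule {τ γ ρ : K} {A : R} {S : ι → R} (hτ : τ + 1 ≠ 0)
    (h : ∀ x, Commute A (awPoly τ γ ρ A (S x))) : A ^ 2 ∈ balancedSubmodule K A S := by
  have hA := Algebra.self_mem_adjoin_singleton K A
  exact ⟨(τ + 1)⁻¹ • (A ^ 3 - γ • A ^ 2 - ρ • A),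
    Subalgebra.smul_mem _ (sub_mem (sub_mem (pow_mem hA 3)
      (Subalgebra.smul_mem _ (pow_mem hA 2) γ)) (Subalgebra.smul_mem _ hA ρ)) _,
    fun x => sq_mul_mul_sub_mul_mul_sq hτ (smul_inv_smul₀ hτ _) (h x)⟩

lemma cube_mem_balancedSubmodule {τ γ ρ : K} {A : R} {S : ι → R} (hτ : τ ≠ 0) (hτ' : τ + 1 ≠ 0)
    (h : ∀ x, Commute A (awPoly τ γ ρ A (S x))) : A ^ 3 ∈ balancedSubmodule K A S := by
  have hA := Algebra.self_mem_adjoin_singleton K A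
  obtain ⟨P, hP⟩ : ∃ P, P = (τ + 1)⁻¹ • (A ^ 3 - γ • A ^ 2 - ρ • A) := ⟨_, rfl⟩
  have hτP : (τ + 1) • P = A ^ 3 - γ • A ^ 2 - ρ • A := by rw [hP, smul_inv_smul₀ hτ']
  have hPA : P ∈ Algebra.adjoin K {A} := by
    rw [hP]
    exact Subalgebra.smul_mem _ (sub_mem (sub_mem (pow_mem hA 3)
      (Subalgebra.smul_mem _ (pow_mem hA 2) γ)) (Subalgebra.smul_mem _ hA ρ)) _
  have hAP : A * P = P * A := Algebra.commute_of_mem_adjoin_self hPA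
  exact ⟨τ⁻¹ • ((τ + 1) • (A * P) - γ • P), Subalgebra.smul_mem _ (sub_mem
    (Subalgebra.smul_mem _ (mul_mem hA hPA) _) (Subalgebra.smul_mem _ hPA γ)) _, fun x =>
    cube_mul_mul_sub_mul_mul_cube hτ hτP (smul_inv_smul₀ hτ _) hAP
      (sq_mul_mul_sub_mul_mul_sq hτ' hτP (h x))⟩

end AskeyWilson

section Positivity

variable {n ι : Type*} [Fintype n] [Fintype ι]

open Matrix

lemma matrix_eq_zero_of_sum_mul_transpose_eq_zero {R : ι → Matrix n n ℝ}
    (h : ∑ x, R x * (R x)ᵀ = 0) (x : ι) : R x = 0 := by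
  have htrace : ∑ x, (R x * (R x)ᵀ).trace = 0 := by rw [← trace_sum, h, trace_zero]
  have hnonneg : ∀ x ∈ Finset.univ, 0 ≤ (R x * (R x)ᵀ).trace := fun x _ =>
    (posSemidef_self_mul_conjTranspose (R x)).trace_nonneg
  exact trace_mul_conjTranspose_self_eq_zero_iff.mp
    ((Finset.sum_eq_zero_iff_of_nonneg hnonneg).mp htrace x (Finset.mem_univ x))

variable [DecidableEq n] {A : Matrix n n ℝ} {S : ι → Matrix n n ℝ} {τ γ ρ : ℝ}

lemma awPoly_transpose {S : Matrix n n ℝ} (hA : Aᵀ = A) (hS : Sᵀ = S) :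
    (awPoly τ γ ρ A S)ᵀ = awPoly τ γ ρ A S := by
  simp only [awPoly, transpose_add, transpose_sub, transpose_smul, transpose_mul, hA, hS,
    ← Matrix.mul_assoc]
  module

variable {E : Type*} [AddCommGroup E] [Module ℝ E] {X : E →ₗ[ℝ] Matrix n n ℝ} {L N : Module.End ℝ E}

lemma sum_awPoly_mul_mul (hL : ∀ f, A * X f = X (L f)) (hN : ∀ f, ∑ x, S x * X f * S x = X (N f))
    (f : E) : ∑ x, awPoly τ γ ρ A (S x) * X f * S x = X (awPoly τ γ ρ L N f) := by
  have hterm : ∀ x, awPoly τ γ ρ A (S x) * X f * S x =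
      A * (A * (S x * X f * S x)) - τ • (A * (S x * X (L f) * S x)) + S x * X (L (L f)) * S x
        - γ • (A * (S x * X f * S x) + S x * X (L f) * S x) - ρ • (S x * X f * S x) := by
    intro x
    simp only [← hL, awPoly, Matrix.add_mul, Matrix.sub_mul, Matrix.smul_mul, Matrix.mul_assoc]
  rw [Finset.sum_congr rfl fun x _ => hterm x]
  simp only [Finset.sum_add_distrib, Finset.sum_sub_distrib, ← Finset.smul_sum,
    ← Matrix.mul_sum, hN, hL, awPoly, LinearMap.add_apply, LinearMap.sub_apply,
    LinearMap.smul_apply, Module.End.mul_apply, map_add, map_sub, map_smul]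

lemma sum_commutator_awPoly_mul_mul (hL : ∀ f, A * X f = X (L f))
    (hN : ∀ f, ∑ x, S x * X f * S x = X (N f)) (hLN : Commute L (awPoly τ γ ρ L N)) (f : E) :
    ∑ x, (A * awPoly τ γ ρ A (S x) - awPoly τ γ ρ A (S x) * A) * X f * S x = 0 := by
  have hterm : ∀ x, (A * awPoly τ γ ρ A (S x) - awPoly τ γ ρ A (S x) * A) * X f * S x =
      A * (awPoly τ γ ρ A (S x) * X f * S x) - awPoly τ γ ρ A (S x) * X (L f) * S x := by
    intro x
    simp only [← hL, Matrix.sub_mul, Matrix.mul_assoc]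
  simp only [hterm, Finset.sum_sub_distrib, ← Matrix.mul_sum, sum_awPoly_mul_mul hL hN, hL]
  rw [← Module.End.mul_apply, hLN.eq, Module.End.mul_apply, sub_self]

-- `∑ x, Rₓ Rₓᵀ` vanishes for the commutators `Rₓ`, since `Rₓᵀ` is a combination of `Aⁱ Sₓ Aʲ`.
theorem commute_awPoly_of_commute (hA : Aᵀ = A) (hS : ∀ x, (S x)ᵀ = S x)
    (hX : ∃ f, X f = 1) (hL : ∀ f, A * X f = X (L f)) (hN : ∀ f, ∑ x, S x * X f * S x = X (N f))
    (hLN : Commute L (awPoly τ γ ρ L N)) (x : ι) : Commute A (awPoly τ γ ρ A (S x)) := by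
  set R := fun x => A * awPoly τ γ ρ A (S x) - awPoly τ γ ρ A (S x) * A with hR
  have hpow : ∀ m : ℕ, ∃ f, X f = A ^ m := fun m => by
    induction m with
    | zero => simpa only [pow_zero] using hX
    | succ m ih =>
      obtain ⟨f, hf⟩ := ih
      exact ⟨L f, by rw [← hL, hf, pow_succ']⟩
  have hsum : ∀ m Y, ∑ x, R x * (A ^ m * S x * Y) = 0 := by
    intro m Y
    obtain ⟨f, hf⟩ := hpow m
    simp only [← hf, ← Matrix.mul_assoc (R _), ← Finset.sum_mul]
    simp only [hR, sum_commutator_awPoly_mul_mul hL hN hLN, Matrix.zero_mul]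
  have hRT : ∀ x, (R x)ᵀ = A ^ 2 * S x * A - τ • (A ^ 1 * S x * A ^ 2) + A ^ 0 * S x * A ^ 3
      - γ • (A ^ 1 * S x * A + A ^ 0 * S x * A ^ 2) - ρ • (A ^ 0 * S x * A)
      - (A ^ 3 * S x * 1 - τ • (A ^ 2 * S x * A) + A ^ 1 * S x * A ^ 2
      - γ • (A ^ 2 * S x * 1 + A ^ 1 * S x * A) - ρ • (A ^ 1 * S x * 1)) := by
    intro x
    simp only [hR, transpose_sub, transpose_mul, awPoly_transpose hA (hS x), hA]
    simp only [awPoly, mul_add, mul_sub, add_mul, sub_mul, mul_smul_comm, smul_mul_assoc,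
      mul_assoc, pow_succ, pow_zero, mul_one, one_mul]
  refine sub_eq_zero.mp (matrix_eq_zero_of_sum_mul_transpose_eq_zero (R := R) ?_ x)
  simp only [hRT, Matrix.mul_add, Matrix.mul_sub, Matrix.mul_smul, Finset.sum_sub_distrib,
    Finset.sum_add_distrib, ← Finset.smul_sum, hsum, smul_zero, add_zero, sub_zero]

end Positivity

section DistanceMatrices

open Matrix

/-- The matrix with `(y, z)`-entry `f (∂(y, z))`; for a distance-regular graph these matrices form
the Bose–Mesner algebra. Coefficients are indexed by `ℤ` so that recurrences in the distance need
no boundary cases. -/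
noncomputable def distMatrix (G : SimpleGraph V) : (ℤ → ℝ) →ₗ[ℝ] Matrix V V ℝ where
  toFun f := Matrix.of fun y z => f (G.dist y z)
  map_add' _ _ := rfl
  map_smul' _ _ := rfl

/-- The dual distance matrix with respect to the base vertex `x`: diagonal, with `y`-th entry
`f (∂(x, y))`. -/
noncomputable def dualDistMatrix [DecidableEq V] (G : SimpleGraph V) (f : ℤ → ℝ) (x : V) :
    Matrix V V ℝ :=
  diagonal fun y => f (G.dist x y)

/-- The tridiagonal operator `f ↦ (i ↦ c i * f (i - 1) + a i * f i + d i * f (i + 1))`. -/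
def threeTerm (c a d : ℤ → ℝ) : Module.End ℝ (ℤ → ℝ) where
  toFun f i := c i * f (i - 1) + a i * f i + d i * f (i + 1)
  map_add' f g := by
    ext i
    simp only [Pi.add_apply]
    ring
  map_smul' e f := by
    ext i
    simp only [Pi.smul_apply, smul_eq_mul, RingHom.id_apply]
    ring

/-- `Γ` has intersection numbers `cᵢ`, `aᵢ` and `bᵢ = d i`, given as real sequences whose values
away from `0, …, D` are irrelevant. -/
structure HasIntersectionArray (G : SimpleGraph V) (c a d : ℤ → ℝ) : Prop where
  ncard_Cset : ∀ y z, ((Cset G y z).ncard : ℝ) = c (G.dist y z)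
  ncard_Aset : ∀ y z, ((Aset G y z).ncard : ℝ) = a (G.dist y z)
  ncard_Bset : ∀ y z, ((Bset G y z).ncard : ℝ) = d (G.dist y z)

variable {G : SimpleGraph V} {c a d : ℤ → ℝ}

lemma distMatrix_apply (f : ℤ → ℝ) (y z : V) : distMatrix G f y z = f (G.dist y z) := rfl

lemma threeTerm_apply (f : ℤ → ℝ) (i : ℤ) :
    threeTerm c a d f i = c i * f (i - 1) + a i * f i + d i * f (i + 1) := rfl

lemma threeTerm_single (j : ℤ) :
    threeTerm c a d (Pi.single j 1) = c (j + 1) • Pi.single (j + 1) 1 + a j • Pi.single j 1 +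
      d (j - 1) • Pi.single (j - 1) 1 := by
  ext i
  simp only [threeTerm_apply, Pi.add_apply, Pi.smul_apply, smul_eq_mul, Pi.single_apply,
    sub_eq_iff_eq_add, eq_sub_iff_add_eq]
  grind

lemma distMatrix_single_zero [DecidableEq V] (hconn : G.Connected) :
    distMatrix G (Pi.single 0 1) = 1 := by
  ext y z
  simp [distMatrix_apply, Pi.single_apply, one_apply, hconn.dist_eq_zero_iff]

lemma distMatrix_single_one [DecidableRel G.Adj] :
    distMatrix G (Pi.single 1 1) = G.adjMatrix ℝ := by
  ext y z
  simp [distMatrix_apply, Pi.single_apply, SimpleGraph.adjMatrix_apply,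
    SimpleGraph.dist_eq_one_iff_adj]

lemma dualDistMatrix_transpose [DecidableEq V] (f : ℤ → ℝ) (x : V) :
    (dualDistMatrix G f x)ᵀ = dualDistMatrix G f x :=
  diagonal_transpose _

lemma sum_dualDistMatrix_mul_mul [Fintype V] [DecidableEq V] (f : ℤ → ℝ) (Y : Matrix V V ℝ) :
    ∑ x, dualDistMatrix G f x * Y * dualDistMatrix G f x =
      (distMatrix G f * distMatrix G f) ⊙ Y := by
  ext y z
  rw [Matrix.sum_apply, hadamard_apply, mul_apply, Finset.sum_mul]
  refine Finset.sum_congr rfl fun x _ => ?_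
  rw [dualDistMatrix, mul_diagonal, diagonal_mul, distMatrix_apply, distMatrix_apply]
  rw [G.dist_comm (u := x) (v := y)]
  ring

lemma dist_mem_of_adj (hconn : G.Connected) {y w : V} (h : G.Adj y w) (z : V) :
    G.dist z w + 1 = G.dist y z ∨ (G.dist z w = G.dist y z ∧ G.dist y z ≠ 0) ∨
      G.dist z w = G.dist y z + 1 := by
  have h1 := h.diff_dist_adj (u := z)
  have h2 : G.dist z y = 0 → G.dist z w = 1 := fun h0 => by
    rw [(hconn.dist_eq_zero_iff).mp h0, SimpleGraph.dist_eq_one_iff_adj.mpr h]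
  rw [G.dist_comm (u := y)]
  lia

open Classical in
lemma sum_neighborFinset_dist_eq [Fintype V] (hconn : G.Connected) (f : ℤ → ℝ)
    (y z : V) : ∑ w ∈ G.neighborFinset y, f (G.dist w z) =
      (Cset G y z).ncard * f (G.dist y z - 1) + (Aset G y z).ncard * f (G.dist y z) +
        (Bset G y z).ncard * f (G.dist y z + 1) := by
  have hncard : ∀ (s : Set V) (e : ℝ), s.ncard * e = ∑ w, if w ∈ s then e else 0 := by
    intro s e
    rw [Set.ncard_eq_toFinset_card', ← Finset.sum_filter, Finset.sum_const, nsmul_eq_mul]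
    congr 3
    ext w
    simp
  rw [SimpleGraph.neighborFinset_eq_filter, Finset.sum_filter, hncard, hncard, hncard,
    ← Finset.sum_add_distrib, ← Finset.sum_add_distrib]
  refine Finset.sum_congr rfl fun w _ => ?_
  simp only [Cset, Aset, Bset, Set.mem_ofPred_eq, SimpleGraph.dist_eq_one_iff_adj]
  by_cases hw : G.Adj y w
  · have hwz := G.dist_comm (u := w) (v := z)
    rcases dist_mem_of_adj hconn hw z with h | ⟨h, h0⟩ | h
    · have : (G.dist w z : ℤ) = G.dist y z - 1 := by lia
      rw [if_pos hw, if_pos ⟨hw, by lia⟩, if_neg (by lia), if_neg (by lia), this]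
      ring
    · rw [if_pos hw, if_neg (by lia), if_pos ⟨hw, h⟩, if_neg (by lia), hwz, h]
      ring
    · rw [if_pos hw, if_neg (by lia), if_neg (by lia), if_pos ⟨hw, h⟩, hwz, h]
      push_cast
      ring
  · simp [hw]

lemma adjMatrix_mul_distMatrix [Fintype V] [DecidableRel G.Adj] (hconn : G.Connected)
    (h : HasIntersectionArray G c a d) (f : ℤ → ℝ) :
    G.adjMatrix ℝ * distMatrix G f = distMatrix G (threeTerm c a d f) := by
  ext y z
  rw [SimpleGraph.adjMatrix_mul_apply, distMatrix_apply, threeTerm_apply, ← h.ncard_Cset,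
    ← h.ncard_Aset, ← h.ncard_Bset, ← sum_neighborFinset_dist_eq hconn]
  simp only [distMatrix_apply]
  refine Finset.sum_congr ?_ fun _ _ => rfl
  ext w
  simp

end DistanceMatrices

section BoseMesner

variable {G : SimpleGraph V} {c a d : ℤ → ℝ} {D : ℕ} {p : ℕ → ℕ → ℕ → ℕ}

lemma exists_adj_dist_eq_of_dist_eq_succ (hconn : G.Connected) {x y : V} {n : ℕ}
    (h : G.dist x y = n + 1) : ∃ w, G.dist x w = n ∧ G.Adj w y := by
  obtain ⟨p, hp⟩ := (hconn y x).exists_walk_length_eq_dist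
  cases p with
  | nil => simp at h
  | @cons _ w _ hyw p =>
    have hle := SimpleGraph.dist_le p
    have htri := hconn.dist_triangle (u := x) (v := w) (w := y)
    rw [SimpleGraph.Walk.length_cons, G.dist_comm, h] at hp
    rw [G.dist_comm] at hle
    rw [SimpleGraph.dist_eq_one_iff_adj.mpr hyw.symm] at htri
    exact ⟨w, by lia, hyw.symm⟩

lemma exists_dist_eq_of_le (hconn : G.Connected) {n i : ℕ} (hi : i ≤ n)
    (h : ∃ x y, G.dist x y = n) : ∃ x y, G.dist x y = i := by
  induction hi using Nat.decreasingInduction with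
  | self => exact h
  | of_succ k _ ih =>
    obtain ⟨x, y, hxy⟩ := ih
    obtain ⟨w, hw, -⟩ := exists_adj_dist_eq_of_dist_eq_succ hconn hxy
    exact ⟨x, w, hw⟩

lemma exists_distMatrix_mul_eq [Fintype V] (hdr : G.IsDistRegularWith D p)
    (hdiam : ∀ x y, G.dist x y ≤ D) (f g : ℤ → ℝ) :
    ∃ h, distMatrix G f * distMatrix G g = distMatrix G h := by
  refine ⟨fun l => ∑ ij ∈ Finset.range (D + 1) ×ˢ Finset.range (D + 1),
    p l.toNat ij.1 ij.2 * (f ij.1 * g ij.2), ?_⟩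
  ext y z
  simp only [Matrix.mul_apply, distMatrix_apply, Int.toNat_natCast]
  rw [← Finset.sum_fiberwise_of_maps_to (g := fun w => (G.dist y w, G.dist z w))
    (t := Finset.range (D + 1) ×ˢ Finset.range (D + 1))
    fun w _ => by simp [hdiam]]
  refine Finset.sum_congr rfl fun ij hij => ?_
  rw [Finset.mem_product, Finset.mem_range_succ_iff, Finset.mem_range_succ_iff] at hij
  rw [← hdr _ _ _ (hdiam y z) hij.1 hij.2 y z rfl, ← nsmul_eq_mul, Set.ncard_eq_toFinset_card',
    ← Finset.sum_const]
  refine Finset.sum_congr (by ext w; simp [Prod.ext_iff]) fun w hw => ?_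
  rw [Set.mem_toFinset] at hw
  rw [← hw.1, ← hw.2, G.dist_comm (u := w)]

lemma distMatrix_one_mul [Fintype V] (hdr : G.IsDistRegularWith D p)
    (hdiam : ∀ x y, G.dist x y ≤ D) (f : ℤ → ℝ) :
    ∃ s : ℝ, distMatrix G 1 * distMatrix G f = s • distMatrix G 1 := by
  obtain ⟨h, hh⟩ := exists_distMatrix_mul_eq hdr hdiam 1 f
  refine ⟨h 0, ?_⟩
  ext y z
  have hz := congrFun₂ hh z z
  simp only [Matrix.mul_apply, distMatrix_apply, Pi.one_apply, SimpleGraph.dist_self] at hz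
  simpa [Matrix.mul_apply, distMatrix_apply] using hz

lemma HasIntersectionArray.zero_eq [Nonempty V] (h : HasIntersectionArray G c a d) : c 0 = 0 := by
  obtain ⟨y⟩ := ‹Nonempty V›
  have hC : Cset G y y = ∅ := by
    ext w
    simp only [Cset, SimpleGraph.dist_self, Set.mem_ofPred_eq, Set.mem_empty_iff_false]
    lia
  simpa [hC] using (h.ncard_Cset y y).symm

lemma Cset_nonempty (hconn : G.Connected) {y z : V} (hyz : y ≠ z) : (Cset G y z).Nonempty := by
  obtain ⟨n, hn⟩ := Nat.exists_eq_succ_of_ne_zero (hconn.pos_dist_of_ne hyz).ne'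
  obtain ⟨w, hw, hwy⟩ := exists_adj_dist_eq_of_dist_eq_succ hconn (G.dist_comm ▸ hn)
  exact ⟨w, SimpleGraph.dist_eq_one_iff_adj.mpr hwy.symm, by rw [hw, hn, Nat.succ_sub_one]⟩

lemma HasIntersectionArray.left_pos [Finite V] (h : HasIntersectionArray G c a d)
    (hconn : G.Connected) {y z : V} (hyz : y ≠ z) : 0 < c (G.dist y z) := by
  rw [← h.ncard_Cset]
  exact_mod_cast (Cset_nonempty hconn hyz).ncard_pos

lemma HasIntersectionArray.right_pos [Finite V] (h : HasIntersectionArray G c a d) {y z : V}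
    (hne : (Bset G y z).Nonempty) : 0 < d (G.dist y z) := by
  rw [← h.ncard_Bset]
  exact_mod_cast hne.ncard_pos

variable [Fintype V]

lemma distMatrix_eq_zero_of_adjMatrix_mul_eq_smul [DecidableRel G.Adj] (hconn : G.Connected)
    (h : HasIntersectionArray G c a d) {δ : ℤ → ℝ} {θ : ℝ} (h0 : δ 0 = 0)
    (hδ : G.adjMatrix ℝ * distMatrix G δ = θ • distMatrix G δ) : distMatrix G δ = 0 := by
  suffices ∀ (n : ℕ) (y z : V), G.dist y z = n → δ n = 0 by
    ext y z
    exact this _ y z rfl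
  intro n
  induction n using Nat.strong_induction_on with
  | _ n ih =>
  obtain _ | n := n
  · simp [h0]
  intro y z hyz
  obtain ⟨w, hyw, hwz⟩ := exists_adj_dist_eq_of_dist_eq_succ hconn hyz
  have hn : δ n = 0 := ih n n.lt_succ_self y w hyw
  have hc : c n * δ (n - 1) = 0 := by
    obtain _ | m := n
    · have := hconn.nonempty
      simp [h.zero_eq]
    · obtain ⟨v, hyv, -⟩ := exists_adj_dist_eq_of_dist_eq_succ hconn hyw
      simp [ih m (by lia) y v hyv]
  have hd : d n ≠ 0 := by
    rw [← hyw, G.dist_comm]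
    exact (h.right_pos ⟨z, SimpleGraph.dist_eq_one_iff_adj.mpr hwz, by
      rw [hyz, G.dist_comm (u := w), hyw]⟩).ne'
  have hrec := congrFun₂ hδ y w
  rw [adjMatrix_mul_distMatrix hconn h, Matrix.smul_apply, distMatrix_apply, distMatrix_apply,
    hyw, threeTerm_apply, hn, hc] at hrec
  simpa [hd] using hrec

lemma distMatrix_mul_self_eq (hconn : G.Connected)
    (h : HasIntersectionArray G c a d) (hdr : G.IsDistRegularWith D p)
    (hdiam : ∀ x y, G.dist x y ≤ D) {f : ℤ → ℝ} {k θ κ : ℝ} (hk : threeTerm c a d 1 = k • 1)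
    (hf : threeTerm c a d f = θ • f + κ • 1) (hΔ : k - θ - κ ≠ 0) (hf0 : f 0 = 1) :
    ∃ e e' : ℝ, distMatrix G f * distMatrix G f = e • distMatrix G f + e' • distMatrix G 1 := by
  classical
  obtain ⟨ψ, hψ⟩ := exists_distMatrix_mul_eq hdr hdiam f f
  obtain ⟨s, hs⟩ := distMatrix_one_mul hdr hdiam f
  have hA1 : G.adjMatrix ℝ * distMatrix G 1 = k • distMatrix G 1 := by
    rw [adjMatrix_mul_distMatrix hconn h, hk, map_smul]
  have hAf : G.adjMatrix ℝ * distMatrix G f = θ • distMatrix G f + κ • distMatrix G 1 := by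
    rw [adjMatrix_mul_distMatrix hconn h, hf, map_add, map_smul, map_smul]
  have hAψ : G.adjMatrix ℝ * distMatrix G ψ = θ • distMatrix G ψ + (κ * s) • distMatrix G 1 := by
    rw [← hψ, ← Matrix.mul_assoc, hAf, Matrix.add_mul, Matrix.smul_mul, Matrix.smul_mul, hs,
      smul_smul]
  obtain ⟨e', he'⟩ : ∃ e', e' * (k - θ - κ) = κ * s - κ * ψ 0 := ⟨_, div_mul_cancel₀ _ hΔ⟩
  refine ⟨ψ 0 - e', e', ?_⟩
  rw [hψ, ← sub_eq_zero, ← map_smul, ← map_smul, ← map_add, ← map_sub]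
  refine distMatrix_eq_zero_of_adjMatrix_mul_eq_smul hconn h (θ := θ) (by simp [hf0]) ?_
  simp only [map_sub, map_add, map_smul, Matrix.mul_sub, Matrix.mul_add, Matrix.mul_smul, hAψ, hA1,
    hAf]
  linear_combination (norm := module) -he' • distMatrix G 1

end BoseMesner

section ClassicalParameters

lemma awPoly_threeTerm {c a d : ℤ → ℝ} {q τ γ ρ ω η : ℝ} (hq : q ≠ 0) (hτ : τ * q = q ^ 2 + 1)
    (h₁ : ∀ i, (a i + a (i + 1)) * (q ^ i + q ^ (i + 1)) -
      τ * (a i * q ^ i + a (i + 1) * q ^ (i + 1)) - γ * (q ^ i + q ^ (i + 1)) = ω)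
    (h₂ : ∀ i, 2 * q ^ i * (c i * d (i - 1) + a i ^ 2 + d i * c (i + 1)) -
      τ * (c i * d (i - 1) * q ^ (i - 1) + a i ^ 2 * q ^ i + d i * c (i + 1) * q ^ (i + 1)) -
      2 * γ * a i * q ^ i - ρ * q ^ i = ω * a i + η) :
    awPoly τ γ ρ (threeTerm c a d) (LinearMap.mulLeft ℝ fun i : ℤ => q ^ i) =
      ω • threeTerm c a d + η • 1 := by
  ext f i
  simp only [awPoly, LinearMap.add_apply, LinearMap.sub_apply, LinearMap.smul_apply, Pi.add_apply,
    Pi.sub_apply, Pi.smul_apply, Module.End.mul_apply, Module.End.one_apply, threeTerm_apply,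
    LinearMap.mulLeft_apply, Pi.mul_apply, smul_eq_mul]
  have w1 := h₁ i
  have w0 := h₁ (i - 1)
  have w2 := h₂ i
  simp only [show i - 1 + 1 = i by ring, show i + 1 - 1 = i by ring, show i - 1 - 1 = i - 2 by ring,
    show i + 1 + 1 = i + 2 by ring] at w0 w1 w2 ⊢
  simp only [zpow_add₀ hq, zpow_sub₀ hq, zpow_ofNat, pow_one] at w0 w1 w2 ⊢
  obtain ⟨B, hB⟩ : ∃ B, q ^ i = B * q ^ 2 := ⟨q ^ i / q ^ 2, by field_simp⟩
  have hB1 : B * q ^ 2 / q = B * q := by field_simp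
  have hB2 : B * q ^ 2 / q ^ 2 = B := by field_simp
  simp only [hB, hB1, hB2] at w0 w1 w2 ⊢
  linear_combination f (i + 1) * d i * w1 + c i * f (i - 1) * w0 + f i * w2 -
    d i * d (i + 1) * B * q ^ 2 * f (i + 2) * hτ - c i * c (i - 1) * B * f (i - 2) * hτ

/-- The Gaussian bracket `[i]` for an integer index, with junk value `0` at `b = 1`. -/
noncomputable def intBracket (b : ℝ) (i : ℤ) : ℝ := (b ^ i - 1) / (b - 1)

/-- The intersection number `cᵢ` of classical parameters, extended to all integers `i`. -/
noncomputable def classicalC (b α : ℝ) (i : ℤ) : ℝ :=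
  intBracket b i * (1 + α * intBracket b (i - 1))

/-- The intersection number `bᵢ` of classical parameters, extended to all integers `i`. -/
noncomputable def classicalB (D : ℕ) (b α β : ℝ) (i : ℤ) : ℝ :=
  (intBracket b D - intBracket b i) * (β - α * intBracket b i)

/-- The intersection number `aᵢ = b₀ - bᵢ - cᵢ` of classical parameters, extended to all
integers `i`. -/
noncomputable def classicalA (D : ℕ) (b α β : ℝ) (i : ℤ) : ℝ :=
  classicalB D b α β 0 - classicalB D b α β i - classicalC b α i

lemma gaussBracket_eq_intBracket {b : ℝ} (hb : b ≠ 1) (i : ℕ) :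
    gaussBracket b i = intBracket b i := by
  rw [gaussBracket, intBracket, geom_sum_eq hb, zpow_natCast]

lemma intBracket_one {b : ℝ} (hb : b ≠ 1) : intBracket b 1 = 1 := by
  rw [intBracket, zpow_one, div_self (sub_ne_zero.mpr hb)]

lemma intBracket_zero (b : ℝ) : intBracket b 0 = 0 := by simp [intBracket]

variable {D : ℕ} {b α β : ℝ}

lemma classicalA_one (hb : b ≠ 1) :
    classicalA D b α β 1 = β - 1 - α + α * intBracket b D := by
  simp only [classicalA, classicalB, classicalC, intBracket_one hb, sub_self, intBracket_zero]
  ring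

lemma threeTerm_classical_one :
    threeTerm (classicalC b α) (classicalA D b α β) (classicalB D b α β) 1 =
      classicalB D b α β 0 • 1 := by
  ext i
  simp only [threeTerm_apply, Pi.one_apply, classicalA, Pi.smul_apply, smul_eq_mul]
  ring

lemma classicalA_eq (hb0 : b ≠ 0) (hb : b ≠ 1) (ha1 : classicalA D b α β 1 = 0) (i : ℤ) :
    classicalA D b α β i =
      -(α * (b + 1) / (b * (b - 1) ^ 2)) * (b ^ i - 1) * (b ^ i - b) := by
  obtain rfl : β = 1 + α - α * intBracket b D := by
    linear_combination ha1 - classicalA_one hb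
  have hb' : b - 1 ≠ 0 := sub_ne_zero.mpr hb
  simp only [classicalA, classicalB, classicalC, intBracket, zpow_sub_one₀ hb0, zpow_zero]
  field_simp
  ring

lemma threeTerm_classical_zpow (hb0 : b ≠ 0) (hb : b ≠ 1) (ha1 : classicalA D b α β 1 = 0) :
    threeTerm (classicalC b α) (classicalA D b α β) (classicalB D b α β) (fun i : ℤ => b⁻¹ ^ i) =
      (classicalB D b α β 0 / b - 1 - 1 / b) • (fun i : ℤ => b⁻¹ ^ i) + ((b + 1) / b) • 1 := by
  ext i
  have hβ : β = 1 + α - α * intBracket b D := by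
    linear_combination ha1 - classicalA_one hb
  have hb' : b - 1 ≠ 0 := sub_ne_zero.mpr hb
  simp only [threeTerm_apply, Pi.add_apply, Pi.smul_apply, Pi.one_apply, smul_eq_mul]
  rw [classicalA_eq hb0 hb ha1, hβ]
  simp only [classicalB, classicalC, intBracket, zpow_sub_one₀ hb0, zpow_zero, inv_zpow',
    neg_sub, neg_add_rev, zpow_add₀ hb0, zpow_sub₀ hb0, zpow_neg, zpow_one]
  field_simp
  ring

lemma commute_threeTerm_classical_awPoly (hb0 : b ≠ 0) (hb : b ≠ 1)
    (ha1 : classicalA D b α β 1 = 0) :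
    ∃ γ ρ, Commute (threeTerm (classicalC b α) (classicalA D b α β) (classicalB D b α β))
      (awPoly (b + b⁻¹) γ ρ
        (threeTerm (classicalC b α) (classicalA D b α β) (classicalB D b α β))
        (LinearMap.mulLeft ℝ fun i : ℤ => b⁻¹ ^ i)) := by
  have hβ : β = 1 + α - α * intBracket b D := by
    linear_combination ha1 - classicalA_one hb
  have hb' : b - 1 ≠ 0 := sub_ne_zero.mpr hb
  obtain ⟨k, hk⟩ : ∃ k, k = classicalB D b α β 0 := ⟨_, rfl⟩
  obtain ⟨η, hη⟩ : ∃ η, η = ((1 - b ^ 2) * k + (1 - 1 / b ^ 2) * (k - 1) * ((1 + b) * (1 + α)) -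
      k * (1 - 1 / b ^ 2)) / (b - 1) := ⟨_, rfl⟩
  refine ⟨α * (b + 1) / b, k * (1 - 1 / b ^ 2) - η, ?_⟩
  rw [awPoly_threeTerm (ω := -(α * (b + 1) ^ 2 / b ^ 2)) (η := η) (inv_ne_zero hb0)
    (by field_simp; ring)]
  · exact ((Commute.refl _).smul_right _).add_right ((Commute.one_right _).smul_right _)
  · intro i
    rw [classicalA_eq hb0 hb ha1, classicalA_eq hb0 hb ha1]
    simp only [inv_zpow', zpow_neg, zpow_add₀ hb0, zpow_one]
    field_simp
    ring
  · intro i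
    rw [classicalA_eq hb0 hb ha1, hη, hk, hβ]
    simp only [classicalB, classicalC, intBracket, zpow_sub_one₀ hb0, zpow_zero, inv_zpow',
      add_sub_cancel_right, zpow_add₀ hb0, zpow_neg, zpow_one]
    field_simp
    ring

end ClassicalParameters

section IntersectionNumbers

variable {G : SimpleGraph V} {D : ℕ} {p : ℕ → ℕ → ℕ → ℕ}

lemma ncard_Cset_eq (hdr : G.IsDistRegularWith D p) (hdiam : ∀ x y, G.dist x y ≤ D) (hD : 1 ≤ D)
    (y z : V) : (Cset G y z).ncard = p (G.dist y z) 1 (G.dist y z - 1) :=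
  hdr _ _ _ (hdiam y z) hD ((Nat.sub_le _ _).trans (hdiam y z)) y z rfl

lemma ncard_Aset_eq (hdr : G.IsDistRegularWith D p) (hdiam : ∀ x y, G.dist x y ≤ D) (hD : 1 ≤ D)
    (y z : V) : (Aset G y z).ncard = p (G.dist y z) 1 (G.dist y z) :=
  hdr _ _ _ (hdiam y z) hD (hdiam y z) y z rfl

lemma ncard_Bset_eq (hdr : G.IsDistRegularWith D p) {y z : V} (h : G.dist y z < D) :
    (Bset G y z).ncard = p (G.dist y z) 1 (G.dist y z + 1) :=
  hdr _ _ _ h.le (Nat.one_le_of_lt h) h y z rfl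

lemma ncard_Cset_add_ncard_Aset_add_ncard_Bset [Finite V] (hconn : G.Connected) (y z : V) :
    (Cset G y z).ncard + (Aset G y z).ncard + (Bset G y z).ncard = (Bset G y y).ncard := by
  classical
  cases nonempty_fintype V
  have hcard := sum_neighborFinset_dist_eq hconn 1 y z
  have hC : Cset G y y = ∅ := by
    ext w
    simp only [Cset, SimpleGraph.dist_self, Set.mem_ofPred_eq, Set.mem_empty_iff_false]
    lia
  have hA : Aset G y y = ∅ := by
    ext w
    simp only [Aset, SimpleGraph.dist_self, Set.mem_ofPred_eq, Set.mem_empty_iff_false]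
    lia
  have hself := sum_neighborFinset_dist_eq hconn 1 y y
  simp only [hC, hA, Set.ncard_empty, Nat.cast_zero, zero_add, Pi.one_apply, mul_one]
    at hcard hself
  exact_mod_cast hcard.symm.trans hself

lemma hasIntersectionArray_of_isDistRegularWith [Finite V] (hconn : G.Connected)
    (hdr : G.IsDistRegularWith D p) (hdiam : ∀ x y, G.dist x y ≤ D) (hD : 1 ≤ D) {c d : ℤ → ℝ}
    (hc : ∀ i ≤ D, (p i 1 (i - 1) : ℝ) = c i) (hd : ∀ i < D, (p i 1 (i + 1) : ℝ) = d i)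
    (hdD : d D = 0) : HasIntersectionArray G c (fun i => d 0 - d i - c i) d := by
  have hC : ∀ y z, ((Cset G y z).ncard : ℝ) = c (G.dist y z) := fun y z => by
    rw [ncard_Cset_eq hdr hdiam hD, hc _ (hdiam y z)]
  have hB : ∀ y z, ((Bset G y z).ncard : ℝ) = d (G.dist y z) := fun y z => by
    rcases (hdiam y z).lt_or_eq with h | h
    · rw [ncard_Bset_eq hdr h, hd _ h]
    · have hempty : Bset G y z = ∅ := by
        ext w
        have := hdiam z w
        simp only [Bset, Set.mem_ofPred_eq, Set.mem_empty_iff_false]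
        lia
      rw [hempty, h, hdD, Set.ncard_empty, Nat.cast_zero]
  refine ⟨hC, fun y z => ?_, hB⟩
  have hcard : ((Cset G y z).ncard + (Aset G y z).ncard + (Bset G y z).ncard : ℝ) =
      (Bset G y y).ncard := mod_cast ncard_Cset_add_ncard_Aset_add_ncard_Bset hconn y z
  rw [hC, hB, hB, SimpleGraph.dist_self, Nat.cast_zero] at hcard
  linarith

lemma intersection_number_add [Finite V] (hconn : G.Connected) (hdr : G.IsDistRegularWith D p)
    (hdiam_le : ∀ x y, G.dist x y ≤ D) (hdiam : ∃ x y, G.dist x y = D) {i : ℕ} (hi : i < D) :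
    p i 1 (i - 1) + p i 1 i + p i 1 (i + 1) = p 0 1 1 := by
  obtain ⟨y, z, rfl⟩ := exists_dist_eq_of_le hconn hi.le hdiam
  have hD : 1 ≤ D := Nat.one_le_of_lt hi
  rw [← ncard_Cset_eq hdr hdiam_le hD, ← ncard_Aset_eq hdr hdiam_le hD, ← ncard_Bset_eq hdr hi,
    ncard_Cset_add_ncard_Aset_add_ncard_Bset hconn,
    ncard_Bset_eq hdr (by rw [SimpleGraph.dist_self]; lia), SimpleGraph.dist_self]

lemma intersection_number_pos [Finite V] (hconn : G.Connected) (hdr : G.IsDistRegularWith D p)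
    (hdiam_le : ∀ x y, G.dist x y ≤ D) (hdiam : ∃ x y, G.dist x y = D) {i : ℕ} (hi : i ≠ 0)
    (hiD : i ≤ D) : 0 < p i 1 (i - 1) := by
  obtain ⟨y, z, rfl⟩ := exists_dist_eq_of_le hconn hiD hdiam
  rw [← ncard_Cset_eq hdr hdiam_le (by lia)]
  exact (Cset_nonempty hconn fun hyz => hi (by rw [hyz, SimpleGraph.dist_self])).ncard_pos

lemma cliqueFree_three_of_intersection_number_eq_zero [Finite V] (hdr : G.IsDistRegularWith D p)
    (hdiam : ∀ x y, G.dist x y ≤ D) (hD : 1 ≤ D) (ha1 : p 1 1 1 = 0) : G.CliqueFree 3 := by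
  classical
  intro s hs
  obtain ⟨y, z, w, hyz, hyw, hzw, -⟩ := SimpleGraph.is3Clique_iff.mp hs
  simp only [← SimpleGraph.dist_eq_one_iff_adj] at hyz hyw hzw
  have hempty : (Aset G y z).ncard = 0 := by rw [ncard_Aset_eq hdr hdiam hD, hyz, ha1]
  rw [Set.ncard_eq_zero] at hempty
  have hw : w ∈ Aset G y z := ⟨hyw, hzw.trans hyz.symm⟩
  simp [hempty] at hw

lemma mul_self_ne_mul_self_add_four {l n : ℤ} (hn : 0 < n) (hl : 0 < l) :
    l * l ≠ n * n + 4 := by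
  intro h
  have hlt : n < l := by nlinarith
  obtain ⟨m, rfl⟩ : ∃ m, l = n + m := ⟨l - n, by ring⟩
  have hm : m = 1 := by nlinarith
  subst hm
  lia

-- In terms of `y = 1 + b`, positivity of `y` and `c₄` forces `a₂ = 1`, so `α = -1 / y²`. Then
-- `n = c₂ = y - 1 / y` and `l = c₃ - c₄ + 2 = y + 1 / y` are integers with `l² - n² = 4`.
lemma lt_neg_one_of_intersection_numbers {b α : ℝ} {a₂ c₂ c₃ c₄ : ℕ} (hb : b ≠ -1)
    (ha₂_pos : 0 < a₂) (hc₂_pos : 0 < c₂) (hc₄_pos : 0 < c₄) (ha₂ : a₂ = -α * (1 + b) ^ 2)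
    (hc₂ : c₂ = (1 + b) * (1 + α)) (hc₃ : c₃ = (1 + b + b ^ 2) * (1 + α * (1 + b)))
    (hc₄ : c₄ = (1 + b + b ^ 2 + b ^ 3) * (1 + α * (1 + b + b ^ 2))) : b < -1 := by
  by_contra! hle
  obtain ⟨y, rfl⟩ : ∃ y, b = y - 1 := ⟨1 + b, by ring⟩
  have hy : 0 < y := by linarith [hle.lt_of_ne' hb]
  have hα : 0 < 1 + α * (y ^ 2 - y + 1) := by
    have hc₄' : (c₄ : ℝ) = y * (1 + (y - 1) ^ 2) * (1 + α * (y ^ 2 - y + 1)) := by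
      rw [hc₄]; ring
    exact pos_of_mul_pos_right (hc₄' ▸ Nat.cast_pos.mpr hc₄_pos) (by positivity)
  have ha₂' : (a₂ : ℝ) * (y ^ 2 - y + 1) < y ^ 2 := by
    have := mul_pos (pow_pos hy 2) hα
    rw [ha₂]
    linear_combination this
  have ha₂_one : a₂ = 1 := by
    by_contra hne
    have h2 : (2 : ℝ) ≤ a₂ := by exact_mod_cast (by lia : 2 ≤ a₂)
    nlinarith [sq_nonneg (y - 1)]
  have hαy : α * y ^ 2 = -1 := by
    rw [ha₂_one] at ha₂
    linear_combination ha₂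
  have hn : (c₂ : ℝ) = y - 1 / y := by
    rw [hc₂]; field_simp; linear_combination hαy
  have hl : ((c₃ - c₄ + 2 : ℤ) : ℝ) = y + 1 / y := by
    push_cast
    rw [hc₃, hc₄]
    field_simp
    linear_combination (y ^ 2 - y + 1 - (1 + (y - 1) ^ 2) * (y ^ 2 - y + 1)) * hαy
  refine mul_self_ne_mul_self_add_four (l := c₃ - c₄ + 2) (n := c₂) (by lia) ?_ ?_
  · exact_mod_cast (hl ▸ by positivity : (0 : ℝ) < (c₃ - c₄ + 2 : ℤ))
  · have : ((c₃ - c₄ + 2 : ℤ) : ℝ) * (c₃ - c₄ + 2 : ℤ) = c₂ * c₂ + 4 := by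
      rw [hl, hn]
      field_simp
      ring
    exact_mod_cast this

lemma HasClassicalParams.lt_neg_one [Finite V] (hconn : G.Connected)
    (hdr : G.IsDistRegularWith D p) (hdiam_le : ∀ x y, G.dist x y ≤ D)
    (hdiam : ∃ x y, G.dist x y = D) (hD : 4 ≤ D) {b α β : ℝ} (hcp : HasClassicalParams D p b α β)
    (ha1 : p 1 1 1 = 0) (ha2 : p 2 1 2 ≠ 0) : b < -1 := by
  obtain ⟨-, hb, hc, hd⟩ := hcp
  have h₁ : (p 1 1 0 + p 1 1 1 + p 1 1 2 : ℝ) = p 0 1 1 :=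
    mod_cast intersection_number_add hconn hdr hdiam_le hdiam (i := 1) (by lia)
  have h₂ : (p 2 1 1 + p 2 1 2 + p 2 1 3 : ℝ) = p 0 1 1 :=
    mod_cast intersection_number_add hconn hdr hdiam_le hdiam (i := 2) (by lia)
  have c₁ := hc 1 (by lia)
  have c₂ := hc 2 (by lia)
  have c₃ := hc 3 (by lia)
  have c₄ := hc 4 hD
  have b₀ := hd 0 (by lia)
  have b₁ := hd 1 (by lia)
  have b₂ := hd 2 (by lia)
  simp only [Nat.reduceAdd, Nat.reduceSub, gaussBracket, Finset.sum_range_succ,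
    Finset.sum_range_zero, pow_zero, pow_one, zero_add] at c₁ c₂ c₃ c₄ b₀ b₁ b₂
  rw [ha1, Nat.cast_zero] at h₁
  refine lt_neg_one_of_intersection_numbers hb (Nat.pos_of_ne_zero ha2)
    (intersection_number_pos hconn hdr hdiam_le hdiam two_ne_zero (by lia))
    (intersection_number_pos hconn hdr hdiam_le hdiam four_ne_zero hD) ?_
    (by rw [c₂]; ring) c₃ c₄
  linear_combination h₂ - (1 + b) * h₁ - c₂ - b₂ + (1 + b) * (c₁ + b₁) - b * b₀

lemma HasClassicalParams.hasIntersectionArray [Finite V] (hconn : G.Connected)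
    (hdr : G.IsDistRegularWith D p) (hdiam : ∀ x y, G.dist x y ≤ D) (hD : 1 ≤ D) {b α β : ℝ}
    (hcp : HasClassicalParams D p b α β) (hb : b ≠ 1) :
    HasIntersectionArray G (classicalC b α) (classicalA D b α β) (classicalB D b α β) := by
  obtain ⟨-, -, hc, hd⟩ := hcp
  refine hasIntersectionArray_of_isDistRegularWith hconn hdr hdiam hD (fun i hi => ?_)
    (fun i hi => ?_) (by rw [classicalB, sub_self, zero_mul])
  · obtain _ | i := i
    · rw [hc 0 hi, classicalC, Nat.cast_zero, intBracket_zero, gaussBracket, Finset.sum_range_zero,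
        zero_mul, zero_mul]
    · rw [hc _ hi, gaussBracket_eq_intBracket hb, gaussBracket_eq_intBracket hb, classicalC]
      simp
  · rw [hd i hi.le, gaussBracket_eq_intBracket hb, gaussBracket_eq_intBracket hb, classicalB]

end IntersectionNumbers

section BalancedSet

open Matrix

variable [Fintype V] {G : SimpleGraph V} {D : ℕ} {p : ℕ → ℕ → ℕ → ℕ}

section

variable [DecidableEq V] {c a d : ℤ → ℝ}

lemma sum_dualDistMatrix_mul_distMatrix_mul {f : ℤ → ℝ} {e e' : ℝ}
    (h : distMatrix G f * distMatrix G f = e • distMatrix G f + e' • distMatrix G 1) (g : ℤ → ℝ) :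
    ∑ x, dualDistMatrix G f x * distMatrix G g * dualDistMatrix G f x =
      distMatrix G ((e • LinearMap.mulLeft ℝ f + e' • 1) g) := by
  rw [sum_dualDistMatrix_mul_mul, h]
  ext y z
  simp [distMatrix_apply, add_mul, mul_assoc]

theorem commute_adjMatrix_awPoly_dualDistMatrix [DecidableRel G.Adj] (hconn : G.Connected)
    (h : HasIntersectionArray G c a d) (hdr : G.IsDistRegularWith D p)
    (hdiam : ∀ x y, G.dist x y ≤ D) {f : ℤ → ℝ} {k θ κ τ γ ρ : ℝ} (hk : threeTerm c a d 1 = k • 1)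
    (hf : threeTerm c a d f = θ • f + κ • 1) (hΔ : k - θ - κ ≠ 0) (hf0 : f 0 = 1)
    (haw : Commute (threeTerm c a d) (awPoly τ γ ρ (threeTerm c a d) (LinearMap.mulLeft ℝ f)))
    (x : V) : Commute (G.adjMatrix ℝ) (awPoly τ γ ρ (G.adjMatrix ℝ) (dualDistMatrix G f x)) := by
  obtain ⟨e, e', he⟩ := distMatrix_mul_self_eq hconn h hdr hdiam hk hf hΔ hf0
  exact commute_awPoly_of_commute (G.transpose_adjMatrix) (dualDistMatrix_transpose f)
    ⟨Pi.single 0 1, distMatrix_single_zero hconn⟩ (adjMatrix_mul_distMatrix hconn h)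
    (sum_dualDistMatrix_mul_distMatrix_mul he) (commute_awPoly_smul_add_smul_one haw e e') x

theorem commute_adjMatrix_awPoly_of_classical [DecidableRel G.Adj] {b α β : ℝ}
    (hconn : G.Connected) (h : HasIntersectionArray G (classicalC b α) (classicalA D b α β)
      (classicalB D b α β)) (hdr : G.IsDistRegularWith D p) (hdiam : ∀ x y, G.dist x y ≤ D)
    (hb0 : b ≠ 0) (hb : b ≠ 1) (ha1 : classicalA D b α β 1 = 0) (hk : classicalB D b α β 0 ≠ 0) :
    ∃ γ ρ, ∀ x, Commute (G.adjMatrix ℝ)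
      (awPoly (b + b⁻¹) γ ρ (G.adjMatrix ℝ) (dualDistMatrix G (fun i => b⁻¹ ^ i) x)) := by
  obtain ⟨γ, ρ, haw⟩ := commute_threeTerm_classical_awPoly hb0 hb ha1
  refine ⟨γ, ρ, commute_adjMatrix_awPoly_dualDistMatrix hconn h hdr hdiam threeTerm_classical_one
    (threeTerm_classical_zpow hb0 hb ha1) ?_ (zpow_zero _) haw⟩
  have hΔ : classicalB D b α β 0 - (classicalB D b α β 0 / b - 1 - 1 / b) - (b + 1) / b =
      classicalB D b α β 0 * (b - 1) / b := by
    field_simp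
    ring
  rw [hΔ]
  exact div_ne_zero (mul_ne_zero hk (sub_ne_zero.mpr hb)) hb0

lemma distMatrix_mem_range_of_mem_adjoin [DecidableRel G.Adj] (hconn : G.Connected)
    (hdr : G.IsDistRegularWith D p) (hdiam : ∀ x y, G.dist x y ≤ D) {P : Matrix V V ℝ}
    (hP : P ∈ Algebra.adjoin ℝ {G.adjMatrix ℝ}) : ∃ f, distMatrix G f = P := by
  induction hP using Algebra.adjoin_induction with
  | mem P hP => exact ⟨_, distMatrix_single_one.trans hP.symm⟩
  | algebraMap e =>
    exact ⟨e • Pi.single 0 1, by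
      rw [map_smul, distMatrix_single_zero hconn, Algebra.algebraMap_eq_smul_one]⟩
  | add P Q _ _ hP hQ =>
    obtain ⟨f, rfl⟩ := hP
    obtain ⟨g, rfl⟩ := hQ
    exact ⟨f + g, map_add _ f g⟩
  | mul P Q _ _ hP hQ =>
    obtain ⟨f, rfl⟩ := hP
    obtain ⟨g, rfl⟩ := hQ
    obtain ⟨h, hh⟩ := exists_distMatrix_mul_eq hdr hdiam f g
    exact ⟨h, hh.symm⟩

lemma distMatrix_single_mem_of_pow_mem [DecidableRel G.Adj] (hconn : G.Connected)
    (h : HasIntersectionArray G c a d) (hc₂ : c 2 ≠ 0) (hc₃ : c 3 ≠ 0)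
    {M : Submodule ℝ (Matrix V V ℝ)} (h₀ : 1 ∈ M) (h₁ : G.adjMatrix ℝ ∈ M)
    (h₂ : G.adjMatrix ℝ ^ 2 ∈ M) (h₃ : G.adjMatrix ℝ ^ 3 ∈ M) :
    distMatrix G (Pi.single 2 1) ∈ M ∧ distMatrix G (Pi.single 3 1) ∈ M := by
  have hmul := fun j => adjMatrix_mul_distMatrix hconn h (Pi.single j 1)
  have hmul₁ := hmul 1
  have hmul₂ := hmul 2
  rw [threeTerm_single, map_add, map_add, map_smul, map_smul, map_smul] at hmul₁ hmul₂
  rw [show (1 + 1 : ℤ) = 2 from rfl, sub_self, distMatrix_single_zero hconn, distMatrix_single_one,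
    ← sq] at hmul₁
  rw [show (2 + 1 : ℤ) = 3 from rfl, show (2 - 1 : ℤ) = 1 from rfl, distMatrix_single_one] at hmul₂
  have hA₂ : distMatrix G (Pi.single 2 1) =
      (c 2)⁻¹ • (G.adjMatrix ℝ ^ 2 - a 1 • G.adjMatrix ℝ - d 0 • 1) := by
    rw [eq_inv_smul_iff₀ hc₂, hmul₁]
    module
  have hA₃ : distMatrix G (Pi.single 3 1) =
      (c 3)⁻¹ • ((c 2)⁻¹ • (G.adjMatrix ℝ ^ 3 - a 1 • G.adjMatrix ℝ ^ 2 - d 0 • G.adjMatrix ℝ) -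
        a 2 • distMatrix G (Pi.single 2 1) - d 1 • G.adjMatrix ℝ) := by
    have hAA₂ := congrArg (G.adjMatrix ℝ * ·) hA₂
    simp only [mul_smul_comm, mul_sub, mul_one, ← pow_succ', ← sq] at hAA₂
    rw [eq_inv_smul_iff₀ hc₃, ← hAA₂, hmul₂]
    module
  have hmem₂ : distMatrix G (Pi.single 2 1) ∈ M := hA₂ ▸ M.smul_mem _
    (M.sub_mem (M.sub_mem h₂ (M.smul_mem _ h₁)) (M.smul_mem _ h₀))
  exact ⟨hmem₂, hA₃ ▸ M.smul_mem _ (M.sub_mem (M.sub_mem (M.smul_mem _ (M.sub_mem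
    (M.sub_mem h₃ (M.smul_mem _ h₂)) (M.smul_mem _ h₁))) (M.smul_mem _ hmem₂)) (M.smul_mem _ h₁))⟩

end

/-- The set `A(y, z)` as a `Finset`, for sums over it. -/
noncomputable def aFinset (G : SimpleGraph V) (y z : V) : Finset V :=
  (Set.toFinite (Aset G y z)).toFinset

lemma mem_aFinset {y z w : V} :
    w ∈ aFinset G y z ↔ G.Adj y w ∧ G.dist z w = G.dist y z := by
  rw [aFinset, Set.Finite.mem_toFinset, Aset, Set.mem_ofPred_eq, SimpleGraph.dist_eq_one_iff_adj]

lemma card_aFinset (y z : V) : (aFinset G y z).card = (Aset G y z).ncard :=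
  (Set.ncard_eq_toFinset_card _ _).symm

lemma distMatrix_single_mul_mul_adjMatrix_apply [DecidableEq V] [DecidableRel G.Adj] (f : ℤ → ℝ)
    (x y z : V) :
    (distMatrix G (Pi.single ↑(G.dist y z) 1) * dualDistMatrix G f x * G.adjMatrix ℝ) y z =
      ∑ w ∈ aFinset G z y, f (G.dist x w) := by
  have haFinset : aFinset G z y =
      (G.neighborFinset z).filter fun w => G.dist y w = G.dist y z := by
    ext w
    rw [mem_aFinset, Finset.mem_filter, SimpleGraph.mem_neighborFinset, G.dist_comm (u := z)]
  rw [SimpleGraph.mul_adjMatrix_apply, haFinset, Finset.sum_filter]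
  refine Finset.sum_congr rfl fun w _ => ?_
  rw [dualDistMatrix, mul_diagonal, distMatrix_apply, Pi.single_apply]
  simp

theorem exists_sum_aFinset_sub_sum_aFinset_eq [DecidableEq V] [DecidableRel G.Adj]
    (hconn : G.Connected) (hdr : G.IsDistRegularWith D p) (hdiam : ∀ x y, G.dist x y ≤ D)
    {f : ℤ → ℝ} {j : ℤ}
    (hj : distMatrix G (Pi.single j 1) ∈
      balancedSubmodule ℝ (G.adjMatrix ℝ) (dualDistMatrix G f)) :
    ∃ r, ∀ x y z, G.dist y z = j →
      ∑ w ∈ aFinset G z y, f (G.dist x w) - ∑ w ∈ aFinset G y z, f (G.dist x w) =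
        r * (f (G.dist x z) - f (G.dist x y)) := by
  obtain ⟨P, hP, hbal⟩ := hj
  obtain ⟨g, rfl⟩ := distMatrix_mem_range_of_mem_adjoin hconn hdr hdiam hP
  refine ⟨g j, ?_⟩
  rintro x y z rfl
  have hXt : ∀ f, (distMatrix G f)ᵀ = distMatrix G f := fun f => by
    ext y z
    rw [transpose_apply, distMatrix_apply, distMatrix_apply, G.dist_comm]
  have hT : G.adjMatrix ℝ * dualDistMatrix G f x * distMatrix G (Pi.single ↑(G.dist y z) 1) =
      (distMatrix G (Pi.single ↑(G.dist y z) 1) * dualDistMatrix G f x * G.adjMatrix ℝ)ᵀ := by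
    simp only [transpose_mul, hXt, dualDistMatrix_transpose, SimpleGraph.transpose_adjMatrix,
      Matrix.mul_assoc]
  have hentry := congrFun₂ (hbal x) y z
  rw [Matrix.sub_apply, Matrix.sub_apply, hT, transpose_apply,
    distMatrix_single_mul_mul_adjMatrix_apply, G.dist_comm (u := y),
    distMatrix_single_mul_mul_adjMatrix_apply, dualDistMatrix, mul_diagonal, diagonal_mul,
    distMatrix_apply] at hentry
  rw [hentry]
  ring

-- Taking `x = y` determines the constant `r` of `exists_sum_aFinset_sub_sum_aFinset_eq`.
theorem sub_mul_sum_aFinset_sub_sum_aFinset [DecidableEq V] [DecidableRel G.Adj]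
    (hconn : G.Connected) (hdr : G.IsDistRegularWith D p) (hdiam : ∀ x y, G.dist x y ≤ D)
    {f : ℤ → ℝ} {y z : V} (hcard : (aFinset G z y).card = (aFinset G y z).card)
    (hyz : distMatrix G (Pi.single ↑(G.dist y z) 1) ∈
      balancedSubmodule ℝ (G.adjMatrix ℝ) (dualDistMatrix G f)) (x : V) :
    (f (G.dist y z) - f 0) *
        (∑ w ∈ aFinset G z y, f (G.dist x w) - ∑ w ∈ aFinset G y z, f (G.dist x w)) =
      (aFinset G y z).card * (f (G.dist y z) - f 1) * (f (G.dist x z) - f (G.dist x y)) := by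
  obtain ⟨r, hr⟩ := exists_sum_aFinset_sub_sum_aFinset_eq hconn hdr hdiam hyz
  have hzy : ∀ w ∈ aFinset G z y, f (G.dist y w) = f (G.dist y z) := fun w hw => by
    rw [(mem_aFinset.mp hw).2, G.dist_comm]
  have hyz : ∀ w ∈ aFinset G y z, f (G.dist y w) = f 1 := fun w hw => by
    rw [SimpleGraph.dist_eq_one_iff_adj.mpr (mem_aFinset.mp hw).1, Nat.cast_one]
  have hself := hr y y z rfl
  rw [Finset.sum_congr rfl hzy, Finset.sum_congr rfl hyz, Finset.sum_const, Finset.sum_const,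
    hcard, SimpleGraph.dist_self, nsmul_eq_mul, nsmul_eq_mul, Nat.cast_zero] at hself
  rw [hr x y z rfl]
  linear_combination -(f (G.dist x z) - f (G.dist x y)) * hself

/-- `G` is a connected triangle-free graph satisfying Terwilliger's balanced set condition at
distances `2` and `3` for the dual eigenvalues `q ^ i`, where `-1 < q < 0`. The condition compares
the sums of `q ^ ∂(x, w)` over `w ∈ A(z, y)` and over `w ∈ A(y, z)`. -/
structure IsBalanced (G : SimpleGraph V) (q : ℝ) : Prop where
  connected : G.Connected
  cliqueFree : G.CliqueFree 3
  neg_one_lt : -1 < q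
  neg : q < 0
  card_comm : ∀ y z, (aFinset G z y).card = (aFinset G y z).card
  balanced : ∀ x y z, G.dist y z ∈ Set.Icc 2 3 →
    (q ^ G.dist y z - 1) *
        (∑ w ∈ aFinset G z y, q ^ G.dist x w - ∑ w ∈ aFinset G y z, q ^ G.dist x w) =
      (aFinset G y z).card * (q ^ G.dist y z - q) * (q ^ G.dist x z - q ^ G.dist x y)

theorem HasClassicalParams.isBalanced (hconn : G.Connected) (hdr : G.IsDistRegularWith D p)
    (hdiam_le : ∀ x y, G.dist x y ≤ D) (hdiam : ∃ x y, G.dist x y = D) (hD : 4 ≤ D) {b α β : ℝ}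
    (hcp : HasClassicalParams D p b α β) (ha1 : p 1 1 1 = 0) (ha2 : p 2 1 2 ≠ 0) :
    IsBalanced G b⁻¹ := by
  classical
  have hb : b < -1 := hcp.lt_neg_one hconn hdr hdiam_le hdiam hD ha1 ha2
  have hb' : b⁻¹ < 0 := inv_lt_zero.mpr (by linarith)
  have h := hcp.hasIntersectionArray hconn hdr hdiam_le (by lia) (by linarith)
  have hdist := fun i hi => exists_dist_eq_of_le hconn (i := i) hi hdiam
  have hc : ∀ i : ℕ, i ≤ D → i ≠ 0 → classicalC b α i ≠ 0 := fun i hi hi0 => by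
    obtain ⟨y, z, rfl⟩ := hdist i hi
    exact (h.left_pos hconn fun hyz => hi0 (by rw [hyz, SimpleGraph.dist_self])).ne'
  obtain ⟨y, z, hyz⟩ := hdist 1 (by lia)
  have ha1' : classicalA D b α β 1 = 0 := by
    rw [← Nat.cast_one, ← hyz, ← h.ncard_Aset, ncard_Aset_eq hdr hdiam_le (by lia), hyz, ha1,
      Nat.cast_zero]
  have hk : classicalB D b α β 0 ≠ 0 := by
    have hz : z ∈ Bset G y y := ⟨hyz, by rw [hyz, SimpleGraph.dist_self]⟩
    simpa using (h.right_pos ⟨z, hz⟩).ne'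
  obtain ⟨γ, ρ, hcomm⟩ := commute_adjMatrix_awPoly_of_classical hconn h hdr hdiam_le (by linarith)
    (by linarith) ha1' hk
  obtain ⟨hmem₂, hmem₃⟩ := distMatrix_single_mem_of_pow_mem hconn h (hc 2 (by lia) two_ne_zero)
    (hc 3 (by lia) three_ne_zero) (one_mem_balancedSubmodule _ _) (self_mem_balancedSubmodule _ _)
    (sq_mem_balancedSubmodule (by linarith) hcomm)
    (cube_mem_balancedSubmodule (by linarith) (by linarith) hcomm)
  have hcard : ∀ y z, (aFinset G z y).card = (aFinset G y z).card := fun y z => by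
    rw [card_aFinset, card_aFinset, ncard_Aset_eq hdr hdiam_le (by lia),
      ncard_Aset_eq hdr hdiam_le (by lia), G.dist_comm]
  refine ⟨hconn, cliqueFree_three_of_intersection_number_eq_zero hdr hdiam_le (by lia) ha1, ?_, hb',
    hcard, fun x y z hyz => ?_⟩
  · rw [neg_lt, ← inv_neg]
    exact inv_lt_one_of_one_lt₀ (by linarith)
  · have hmem : distMatrix G (Pi.single ↑(G.dist y z) 1) ∈
        balancedSubmodule ℝ (G.adjMatrix ℝ) (dualDistMatrix G fun i => b⁻¹ ^ i) := by
      obtain h2 | h3 : G.dist y z = 2 ∨ G.dist y z = 3 := by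
        rw [Set.mem_Icc] at hyz
        lia
      exacts [h2 ▸ hmem₂, h3 ▸ hmem₃]
    simpa using sub_mul_sum_aFinset_sub_sum_aFinset hconn hdr hdiam_le (hcard y z) hmem x

end BalancedSet

section Pentagon

variable {G : SimpleGraph V} {q : ℝ} {s t u v w x y z : V}

lemma dist_eq_two_of_adj_of_adj (hG : G.CliqueFree 3) (hst : G.Adj s t) (htu : G.Adj t u)
    (hsu : s ≠ u) : G.dist s u = 2 := by
  classical
  have hadj : ¬G.Adj s u := fun h => hG _ (SimpleGraph.is3Clique_triple_iff.mpr ⟨hst, h, htu⟩)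
  rw [SimpleGraph.dist, SimpleGraph.edist_eq_two_iff.mpr ⟨hsu, hadj, t, hst, htu.symm⟩]
  rfl

lemma dist_triangle_ineqs (hconn : G.Connected) (x y z : V) :
    G.dist x z ≤ G.dist x y + G.dist y z ∧ G.dist x y ≤ G.dist x z + G.dist y z ∧
      G.dist y z ≤ G.dist x y + G.dist x z := by
  have hxz := hconn.dist_triangle (u := x) (v := z) (w := y)
  have hyx := hconn.dist_triangle (u := y) (v := x) (w := z)
  rw [G.dist_comm (u := z)] at hxz
  rw [G.dist_comm (u := y) (v := x)] at hyx
  exact ⟨hconn.dist_triangle, hxz, hyx⟩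

namespace IsBalanced

variable [Fintype V]

lemma pow_lt_one (H : IsBalanced G q) {n : ℕ} (hn : n ≠ 0) : q ^ n < 1 :=
  (le_abs_self _).trans_lt <| abs_pow q n ▸
    pow_lt_one₀ (abs_nonneg q) (abs_lt.mpr ⟨H.neg_one_lt, H.neg.trans one_pos⟩) hn

lemma pow_mul_pow_sub_pow_succ_pos (H : IsBalanced G q) (n : ℕ) :
    0 < q ^ n * (q ^ n - q ^ (n + 1)) := by
  have hq := H.neg
  have := mul_pos (sq_pos_of_ne_zero (pow_ne_zero n hq.ne)) (by linarith : 0 < 1 - q)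
  linear_combination this

lemma pow_succ_mul_pow_sub_pow_succ_neg (H : IsBalanced G q) (n : ℕ) :
    q ^ (n + 1) * (q ^ n - q ^ (n + 1)) < 0 := by
  have := mul_neg_of_neg_of_pos H.neg (H.pow_mul_pow_sub_pow_succ_pos n)
  linear_combination this

lemma dist_mem_of_mem_aFinset (H : IsBalanced G q) (v : V) (hw : w ∈ aFinset G u s) :
    G.dist s w = G.dist s u ∧
      (G.dist v w = G.dist v u + 1 ∨ G.dist v w = G.dist v u ∨ G.dist v w + 1 = G.dist v u) := by
  obtain ⟨huw, hsw⟩ := mem_aFinset.mp hw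
  have hvuw := dist_triangle_ineqs H.connected v u w
  rw [SimpleGraph.dist_eq_one_iff_adj.mpr huw] at hvuw
  exact ⟨hsw.trans G.dist_comm, by lia⟩

lemma sum_aFinset_eq_of_dist_eq (H : IsBalanced G q) (hsu : G.dist s u = 2)
    (hx : G.dist x s = G.dist x u) :
    ∑ w ∈ aFinset G u s, q ^ G.dist x w = ∑ w ∈ aFinset G s u, q ^ G.dist x w := by
  have hbal := H.balanced x s u (by simp [hsu])
  rw [hx, sub_self, mul_zero, hsu] at hbal
  exact sub_eq_zero.mp
    ((mul_eq_zero.mp hbal).resolve_left (sub_ne_zero.mpr (H.pow_lt_one two_ne_zero).ne))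

lemma sum_aFinset_sub_pow_eq (H : IsBalanced G q) {i : ℕ} (hsu : G.dist s u ∈ Set.Icc 2 3)
    (hvs : G.dist v s = i) (hvu : G.dist v u = i + G.dist s u) :
    ∑ w ∈ aFinset G u s, (q ^ G.dist v w - q ^ G.dist v u) =
      ∑ w ∈ aFinset G s u, (q ^ G.dist v w - q ^ (i + 1)) := by
  have hbal := H.balanced v s u hsu
  have hne : q ^ G.dist s u - 1 ≠ 0 :=
    sub_ne_zero.mpr (H.pow_lt_one (by have := hsu.1; lia)).ne
  simp only [Finset.sum_sub_distrib, Finset.sum_const, nsmul_eq_mul, H.card_comm s u]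
  refine mul_left_cancel₀ hne ?_
  rw [hvs, hvu, pow_add] at hbal
  rw [hvu, pow_add, pow_succ]
  linear_combination hbal

lemma dist_eq_of_mul_sum_nonpos (H : IsBalanced G q) {i k : ℕ} (hk : k ∈ Set.Icc 1 2)
    (hsu : G.dist s u = k + 1) (hvs : G.dist v s = i) (hvu : G.dist v u = i + (k + 1))
    (hsum : q ^ (i + k) * ∑ w ∈ aFinset G s u, (q ^ G.dist v w - q ^ (i + 1)) ≤ 0)
    (hw : w ∈ aFinset G u s) : G.dist v w = i + (k + 1) := by
  have hdist : ∀ y ∈ aFinset G u s, G.dist v y = i + (k + 1) ∨ G.dist v y = i + k := fun y hy => by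
    have hmem := H.dist_mem_of_mem_aFinset v hy
    have htri := H.connected.dist_triangle (u := v) (v := s) (w := y)
    lia
  have hsu' : G.dist s u ∈ Set.Icc 2 3 := by
    rw [hsu]
    exact ⟨Nat.succ_le_succ hk.1, Nat.succ_le_succ hk.2⟩
  rw [← H.sum_aFinset_sub_pow_eq hsu' hvs (hsu ▸ hvu), Finset.mul_sum, hvu] at hsum
  have hpos := H.pow_mul_pow_sub_pow_succ_pos (i + k)
  have hnonneg : ∀ y ∈ aFinset G u s,
      0 ≤ q ^ (i + k) * (q ^ G.dist v y - q ^ (i + (k + 1))) := fun y hy => by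
    rcases hdist y hy with h | h <;> rw [h]
    · rw [sub_self, mul_zero]
    · exact hpos.le
  have hzero := (Finset.sum_eq_zero_iff_of_nonneg hnonneg).mp
    (hsum.antisymm (Finset.sum_nonneg hnonneg)) w hw
  refine (hdist w hw).resolve_right fun h => hpos.ne' ?_
  rwa [h] at hzero

lemma dist_eq_succ_of_adj (H : IsBalanced G q) (hvs : G.Adj v s) (hsu : G.dist s u ∈ Set.Icc 2 3)
    (hvu : G.dist v u = G.dist s u + 1) (hw : w ∈ aFinset G u s) :
    G.dist v w = G.dist s u + 1 := by
  obtain ⟨k, hk⟩ : ∃ k, G.dist s u = k + 1 := ⟨G.dist s u - 1, by have := hsu.1; lia⟩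
  have htwo : ∀ y ∈ aFinset G s u, G.dist v y = 2 := fun y hy => by
    obtain ⟨hsy, huy⟩ := mem_aFinset.mp hy
    refine dist_eq_two_of_adj_of_adj H.cliqueFree hvs hsy ?_
    rintro rfl
    rw [G.dist_comm] at huy
    lia
  rw [hk] at hsu ⊢
  rw [add_comm]
  refine H.dist_eq_of_mul_sum_nonpos ⟨by have := hsu.1; lia, by have := hsu.2; lia⟩ hk
    (SimpleGraph.dist_eq_one_iff_adj.mpr hvs) (by lia) (le_of_eq ?_) hw
  rw [Finset.sum_eq_zero fun y hy => by rw [htwo y hy, sub_self], mul_zero]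

lemma dist_eq_add_two (H : IsBalanced G q) {i : ℕ} (hsu : G.dist s u = 2) (hvs : G.dist v s = i)
    (hvu : G.dist v u = i + 2) (hw : w ∈ aFinset G u s) : G.dist v w = i + 2 := by
  refine H.dist_eq_of_mul_sum_nonpos (k := 1) (by simp) hsu hvs hvu ?_ hw
  rw [Finset.mul_sum]
  refine Finset.sum_nonpos fun y hy => ?_
  have hmem := H.dist_mem_of_mem_aFinset v hy
  have htri := dist_triangle_ineqs H.connected v u y
  obtain h | h : G.dist v y = i + 1 ∨ G.dist v y = i := by
    rw [G.dist_comm (u := u) (v := s)] at hmem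
    lia
  · rw [h, sub_self, mul_zero]
  · rw [h]
    exact (H.pow_succ_mul_pow_sub_pow_succ_neg i).le

lemma dist_le_two_of_mem_aFinset (H : IsBalanced G q) (hsu : G.dist s u = 2)
    (hy : y ∈ aFinset G s u) (hz : z ∈ aFinset G u s) : G.dist y z ≤ 2 := by
  obtain ⟨hsy, huy⟩ := mem_aFinset.mp hy
  obtain ⟨huz, hsz⟩ := mem_aFinset.mp hz
  rw [hsu, G.dist_comm] at huy
  rw [G.dist_comm (u := u), hsu] at hsz
  by_contra hlt
  have hyz : G.dist y z = 3 := by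
    have htri := H.connected.dist_triangle (u := y) (v := u) (w := z)
    rw [huy, SimpleGraph.dist_eq_one_iff_adj.mpr huz] at htri
    lia
  have hu : u ∈ aFinset G z s := mem_aFinset.mpr ⟨huz.symm, by rw [hsu, G.dist_comm, hsz]⟩
  have := H.dist_eq_succ_of_adj hsy.symm (by simp [hsz]) (by rw [hyz, hsz]) hu
  lia

lemma dist_eq_add_two_of_mem_aFinset (H : IsBalanced G q) {i : ℕ} (hsu : G.dist s u = 2)
    (hy : y ∈ aFinset G s u) (hz : z ∈ aFinset G u s) (hxz : G.dist x z = i)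
    (hxy : G.dist x y = i + 2) : G.dist x s = i + 2 := by
  have hyz := H.dist_le_two_of_mem_aFinset hsu hy hz
  have htri := dist_triangle_ineqs H.connected x z y
  rw [G.dist_comm] at hyz
  have hs : s ∈ aFinset G y z := by
    have hsz := (mem_aFinset.mp hz).2
    rw [mem_aFinset, G.dist_comm (u := z), G.dist_comm (u := y), hsz, G.dist_comm (u := u), hsu]
    exact ⟨(mem_aFinset.mp hy).1.symm, by lia⟩
  exact H.dist_eq_add_two (by lia) hxz hxy hs

lemma dist_le_of_mem_aFinset (H : IsBalanced G q) (hsu : G.dist s u = 2)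
    (hx : G.dist x s = G.dist x u) (hs : ∀ y ∈ aFinset G s u, G.dist x y ≤ G.dist x s)
    (hz : z ∈ aFinset G u s) : G.dist x z ≤ G.dist x u := by
  by_contra! hlt
  obtain ⟨i, hi⟩ : ∃ i, G.dist x u = i + 1 := by
    have htri := dist_triangle_ineqs H.connected x s u
    exact ⟨G.dist x u - 1, by lia⟩
  have hxz : G.dist x z = i + 2 := by
    have := H.dist_mem_of_mem_aFinset x hz
    lia
  have hs' : ∀ y ∈ aFinset G s u, G.dist x y = i + 1 := fun y hy => by
    have hy' := H.dist_mem_of_mem_aFinset x hy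
    have hle := hs y hy
    have hne : G.dist x y ≠ i := fun hxy => by
      have := H.dist_eq_add_two_of_mem_aFinset (G.dist_comm.trans hsu) hz hy hxy hxz
      lia
    lia
  have hsum : ∑ w ∈ aFinset G u s, q ^ (i + 1) * (q ^ (i + 1) - q ^ G.dist x w) = 0 := by
    have hconst : ∀ y ∈ aFinset G s u, q ^ G.dist x y = q ^ (i + 1) := fun y hy => by rw [hs' y hy]
    rw [← Finset.mul_sum, Finset.sum_sub_distrib, H.sum_aFinset_eq_of_dist_eq hsu hx,
      Finset.sum_congr rfl hconst, Finset.sum_const, Finset.sum_const, H.card_comm s u, sub_self,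
      mul_zero]
  have hpos := H.pow_mul_pow_sub_pow_succ_pos (i + 1)
  have hnonneg : ∀ w ∈ aFinset G u s, 0 ≤ q ^ (i + 1) * (q ^ (i + 1) - q ^ G.dist x w) := by
    intro w hw
    obtain h | h | h : G.dist x w = i + 2 ∨ G.dist x w = i + 1 ∨ G.dist x w = i := by
      have := H.dist_mem_of_mem_aFinset x hw
      lia
    all_goals rw [h]
    · exact hpos.le
    · rw [sub_self, mul_zero]
    · linarith [H.pow_succ_mul_pow_sub_pow_succ_neg i]
  have hzero := (Finset.sum_eq_zero_iff_of_nonneg hnonneg).mp hsum z hz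
  rw [hxz] at hzero
  exact hpos.ne hzero.symm

-- Subtract `q` times the balanced set condition for `x` from the one for `v`.
lemma pow_dist_le_pow_dist (H : IsBalanced G q) (hsu : G.dist s u = 2)
    (hx : G.dist x s = G.dist x u) (hne : (aFinset G u s).Nonempty)
    (hus : ∀ w ∈ aFinset G u s, q ^ G.dist v w = q * q ^ G.dist x w)
    (hle : ∀ w ∈ aFinset G s u, q ^ G.dist v w ≤ q * q ^ G.dist x w) :
    q ^ G.dist v u ≤ q ^ G.dist v s := by
  have hq := H.neg
  have hbal := H.balanced v s u (by simp [hsu])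
  rw [hsu, Finset.sum_congr rfl hus, ← Finset.mul_sum, H.sum_aFinset_eq_of_dist_eq hsu hx] at hbal
  have hsum := Finset.sum_le_sum hle
  rw [← Finset.mul_sum] at hsum
  have hnonpos := hbal ▸ mul_nonpos_of_nonpos_of_nonneg
    (sub_nonpos.mpr (H.pow_lt_one two_ne_zero).le) (sub_nonneg.mpr hsum)
  have hcard : (0 : ℝ) < (aFinset G s u).card := by
    rw [← H.card_comm]
    exact_mod_cast hne.card_pos
  have hpos : 0 < (aFinset G s u).card * (q ^ 2 - q) :=
    mul_pos hcard (by linarith [sq_nonneg q])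
  exact sub_nonpos.mp (nonpos_of_mul_nonpos_right hnonpos hpos)

lemma Bset_subset_of_adj (H : IsBalanced G q) (hst : G.Adj s t) (hs : G.dist x s ∈ Set.Icc 2 3)
    (ht : G.dist x t ≤ G.dist x s) : Bset G x s ⊆ Bset G x t := by
  rintro v ⟨hxv, hsv⟩
  refine ⟨hxv, ?_⟩
  rw [G.dist_comm] at hsv ⊢
  have hxs := dist_triangle_ineqs H.connected x s t
  have hvs := dist_triangle_ineqs H.connected v s t
  have hvx := H.connected.dist_triangle (u := v) (v := x) (w := t)
  rw [SimpleGraph.dist_eq_one_iff_adj.mpr hst] at hxs hvs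
  rw [G.dist_comm (u := v) (v := x), hxv] at hvx
  rcases ht.eq_or_lt with heq | hlt
  · have ht' : t ∈ aFinset G s x := mem_aFinset.mpr ⟨hst, heq.trans G.dist_comm⟩
    rw [H.dist_eq_succ_of_adj (SimpleGraph.dist_eq_one_iff_adj.mp hxv).symm hs hsv ht', heq]
  · lia

lemma dist_ne_of_mem_aFinset (H : IsBalanced G q) {i : ℕ} (hsu : G.dist s u = 2)
    (hst : G.Adj s t) (htu : G.Adj t u) (hvu : G.dist v u = i + 2) (hvt : G.dist v t = i + 1)
    (hy : y ∈ aFinset G s u) : G.dist v y ≠ i := by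
  intro hvy
  obtain ⟨hsy, huy⟩ := mem_aFinset.mp hy
  rw [hsu] at huy
  have hyt : G.dist y t = 2 := by
    refine dist_eq_two_of_adj_of_adj H.cliqueFree hsy.symm hst ?_
    rintro rfl
    rw [SimpleGraph.dist_eq_one_iff_adj.mpr htu.symm] at huy
    lia
  have hyu : G.dist y u = 2 := G.dist_comm.trans huy
  have ht : t ∈ aFinset G u y := mem_aFinset.mpr ⟨htu.symm, by rw [hyt, huy]⟩
  have := H.dist_eq_add_two hyu hvy hvu ht
  lia

lemma dist_ne_three (H : IsBalanced G q) (hxv : G.Adj x v) (hsu : G.dist s u = 2)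
    (hs : G.dist x s = 3) (hu : G.dist x u = 3) (hvu : G.dist v u = 4)
    (hne : (aFinset G u s).Nonempty)
    (hus : ∀ y ∈ aFinset G u s, G.dist v y = G.dist x y + 1)
    (hsy : ∀ y ∈ aFinset G s u, G.dist x y ≤ 3 ∧ G.dist v y ≠ 2) : G.dist v s ≠ 3 := by
  have hlt : q ^ 3 < q ^ 4 := (Odd.pow_neg ⟨1, rfl⟩ H.neg).trans (Even.pow_pos ⟨2, rfl⟩ H.neg.ne)
  intro hvs
  refine hlt.not_ge ?_
  rw [← hvs, ← hvu]
  refine H.pow_dist_le_pow_dist hsu (hs.trans hu.symm) hne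
    (fun y hy => by rw [hus y hy, pow_succ']) fun y hy => ?_
  obtain ⟨hxy, hvy⟩ := hsy y hy
  have := H.dist_mem_of_mem_aFinset x hy
  have := H.dist_mem_of_mem_aFinset v hy
  have hxvy := dist_triangle_ineqs H.connected x v y
  rw [SimpleGraph.dist_eq_one_iff_adj.mpr hxv] at hxvy
  rw [← pow_succ']
  obtain h | ⟨h, h'⟩ : G.dist v y = G.dist x y + 1 ∨ G.dist v y = 3 ∧ G.dist x y = 3 := by lia
  · rw [h]
  · rw [h, h']
    exact hlt.le

theorem Bset_subset_of_dist_eq_two (H : IsBalanced G q) (hst : G.Adj s t) (htu : G.Adj t u)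
    (hsu : G.dist s u = 2) (hz : z ∈ aFinset G u s) (hs : G.dist x s = 3) (hu : G.dist x u = 3)
    (hxz : G.dist x z = 2) (hxt : G.dist x t = 2) : Bset G x u ⊆ Bset G x s := by
  rintro v hv
  have hxv : G.dist x v = 1 := hv.1
  have hvu : G.dist v u = 4 := by rw [G.dist_comm, hv.2, hu]
  have hdist : ∀ {y}, G.Adj u y → G.dist x y ≤ 3 → G.dist v y = G.dist x y + 1 := fun huy hxy => by
    rw [G.dist_comm, (H.Bset_subset_of_adj huy (by simp [hu]) (hu ▸ hxy) hv).2]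
  have hvt : G.dist v t = 3 := by rw [hdist htu.symm (by lia), hxt]
  have hvz : G.dist v z = 3 := by rw [hdist (mem_aFinset.mp hz).1 (by lia), hxz]
  have hsy : ∀ y ∈ aFinset G s u, G.dist x y ≤ 3 := fun y hy => by
    have hmem := H.dist_mem_of_mem_aFinset x hy
    have hne : G.dist x y ≠ 4 := fun hxy => by
      have := H.dist_eq_add_two_of_mem_aFinset hsu hy hz hxz hxy
      lia
    lia
  have huy : ∀ y ∈ aFinset G u s, G.dist x y ≤ 3 := fun y hy => by
    have := H.dist_le_of_mem_aFinset hsu (hs.trans hu.symm) (by rwa [hs]) hy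
    lia
  have hvs_two : G.dist v s ≠ 2 := fun hvs => by
    have := H.dist_eq_add_two hsu hvs hvu hz
    lia
  have hvs_three : G.dist v s ≠ 3 :=
    H.dist_ne_three (SimpleGraph.dist_eq_one_iff_adj.mp hxv) hsu hs hu hvu ⟨z, hz⟩
      (fun y hy => hdist (mem_aFinset.mp hy).1 (huy y hy))
      fun y hy => ⟨hsy y hy, H.dist_ne_of_mem_aFinset hsu hst htu hvu hvt hy⟩
  have := dist_triangle_ineqs H.connected x v s
  exact ⟨hxv, by rw [G.dist_comm]; lia⟩

theorem Bset_subset_of_pentagon (H : IsBalanced G q) (hst : G.Adj s t) (htu : G.Adj t u)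
    (huz : G.Adj u z) (hzw : G.Adj z w) (hws : G.Adj w s) (hs : G.dist x s = 3)
    (hu : G.dist x u = 3) (hz : G.dist x z = 2) : Bset G x u ⊆ Bset G x s := by
  have hsz : G.dist s z = 2 :=
    dist_eq_two_of_adj_of_adj H.cliqueFree hws.symm hzw.symm (by rintro rfl; lia)
  have hsu : G.dist s u = 2 := dist_eq_two_of_adj_of_adj H.cliqueFree hst htu (by
    rintro rfl
    rw [SimpleGraph.dist_eq_one_iff_adj.mpr huz] at hsz
    lia)
  have htz : G.dist t z = 2 := dist_eq_two_of_adj_of_adj H.cliqueFree htu huz (by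
    rintro rfl
    rw [SimpleGraph.dist_eq_one_iff_adj.mpr hst] at hsz
    lia)
  have hz' : z ∈ aFinset G u s := mem_aFinset.mpr ⟨huz, by rw [hsz, G.dist_comm, hsu]⟩
  have hs' : s ∈ aFinset G t z := mem_aFinset.mpr ⟨hst.symm, by rw [htz, G.dist_comm, hsz]⟩
  have ht_four : G.dist x t ≠ 4 := fun ht => by
    have := H.dist_eq_add_two (G.dist_comm.trans htz) hz ht hs'
    lia
  obtain ht | ht : G.dist x t = 2 ∨ G.dist x t = 3 := by
    have := dist_triangle_ineqs H.connected x s t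
    rw [SimpleGraph.dist_eq_one_iff_adj.mpr hst] at this
    lia
  · exact H.Bset_subset_of_dist_eq_two hst htu hsu hz' hs hu hz ht
  · exact (H.Bset_subset_of_adj htu.symm (by simp [hu]) (by lia)).trans
      (H.Bset_subset_of_adj hst.symm (by simp [ht]) (by lia))

end IsBalanced

end Pentagon

/-- Classical parameters `(D, b, α, β)`, `D ≥ 4`, `a₁ = 0`, `a₂ ≠ 0`.
If `s t u z w` is a pentagon with `s, u ∈ Γ₃(x)` and `z ∈ Γ₂(x)`, then
`B(x,s) = B(x,u)`. -/
theorem pentagon_Bset_eq [Fintype V] (G : SimpleGraph V) (hconn : G.Connected)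
    (D : ℕ) (hD : 4 ≤ D)
    (hdiam_le : ∀ x y : V, G.dist x y ≤ D) (hdiam : ∃ x y : V, G.dist x y = D)
    (p : ℕ → ℕ → ℕ → ℕ) (hdr : G.IsDistRegularWith D p)
    (b α β : ℝ) (hcp : HasClassicalParams D p b α β)
    (ha1 : p 1 1 1 = 0) (ha2 : p 2 1 2 ≠ 0)
    (x s t u z w : V)
    (hst : G.dist s t = 1) (htu : G.dist t u = 1) (huz : G.dist u z = 1)
    (hzw : G.dist z w = 1) (hws : G.dist w s = 1)
    (hs : G.dist x s = 3) (hu : G.dist x u = 3) (hz : G.dist x z = 2) :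
    Bset G x s = Bset G x u := by
  have H : IsBalanced G b⁻¹ := hcp.isBalanced hconn hdr hdiam_le hdiam hD ha1 ha2
  rw [SimpleGraph.dist_eq_one_iff_adj] at hst htu huz hzw hws
  have hsub : Bset G x u ⊆ Bset G x s := H.Bset_subset_of_pentagon hst htu huz hzw hws hs hu hz
  have hcard : (Bset G x s).ncard = (Bset G x u).ncard := by
    rw [ncard_Bset_eq hdr (by lia), ncard_Bset_eq hdr (by lia), hs, hu]
  exact (Set.eq_of_subset_of_ncard_le hsub hcard.le).symm
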